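/- If D ⊆ ℝℙⁿ is an open properly convex set, then its elliptic tube D^e ⊆ ℂℙⁿ is ℂ-convex. -/

import Mathlib

open scoped ComplexConjugate

noncomputable section

abbrev RV (n : ℕ) : Type := Fin (n + 1) → ℝ
abbrev CV (n : ℕ) : Type := Fin (n + 1) → ℂ
abbrev RP (n : ℕ) : Type := Projectivization ℝ (RV n)
abbrev CP (n : ℕ) : Type := Projectivization ℂ (CV n)

/-- The quotient topology on a projectivization. -/
instance projTopology {K V : Type*} [DivisionRing K] [AddCommGroup V] [Module K V]
    [TopologicalSpace V] : TopologicalSpace (Projectivization K V) :=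
  inferInstanceAs (TopologicalSpace (Quotient (projectivizationSetoid K V)))

/-- Complexification of a real vector. -/
def cplx {n : ℕ} (v : RV n) : CV n := fun i => (v i : ℂ)

/-- The closed (possibly degenerate) projective segment spanned by two lifts. -/
def realSeg {n : ℕ} (v₀ v₁ : RV n) : Set (RP n) :=
  {x | ∃ c₀ c₁ : ℝ, 0 ≤ c₀ * c₁ ∧ ∃ h : c₀ • v₀ + c₁ • v₁ ≠ 0,
    x = Projectivization.mk ℝ (c₀ • v₀ + c₁ • v₁) h}

/-- The elliptic tube over the closed segment determined by the lifts `v₀ v₁`. -/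
def segTube {n : ℕ} (v₀ v₁ : RV n) : Set (CP n) :=
  {z | ∃ c₀ c₁ : ℂ, 0 ≤ (c₀ * conj c₁).re ∧ ∃ h : c₀ • cplx v₀ + c₁ • cplx v₁ ≠ 0,
    z = Projectivization.mk ℂ (c₀ • cplx v₀ + c₁ • cplx v₁) h}

/-- The elliptic tube over a subset `D` of real projective space: the union of the tubes
over all closed segments contained in `D`. -/
def eTube {n : ℕ} (D : Set (RP n)) : Set (CP n) :=
  ⋃ (v₀ : RV n) (v₁ : RV n) (_ : v₀ ≠ 0) (_ : v₁ ≠ 0) (_ : realSeg v₀ v₁ ⊆ D),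
    segTube v₀ v₁

/-- Real projective lines. -/
def isLineR {n : ℕ} (L : Set (RP n)) : Prop :=
  ∃ W : Submodule ℝ (RV n), Module.finrank ℝ W = 2 ∧ L = {x | x.rep ∈ W}

/-- Convexity in real projective space: the set contains no projective line and its
intersection with every projective line is connected. -/
def convexR {n : ℕ} (D : Set (RP n)) : Prop :=
  (∀ L, isLineR L → ¬ L ⊆ D) ∧ ∀ L, isLineR L → IsPreconnected (D ∩ L)

/-- Projective hyperplanes in real projective space. -/
def isHypR {n : ℕ} (H : Set (RP n)) : Prop :=
  ∃ ξ : Module.Dual ℝ (RV n), ξ ≠ 0 ∧ H = {x | ξ x.rep = 0}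

/-- Proper convexity: convex, not contained in a projective hyperplane, and containing
no affine line (projective line with one point removed). -/
def properlyConvexR {n : ℕ} (D : Set (RP n)) : Prop :=
  convexR D ∧ (∀ H, isHypR H → ¬ D ⊆ H) ∧
    ∀ L, isLineR L → ∀ p ∈ L, ¬ (L \ {p}) ⊆ D

/-- Complex projective lines in `ℂℙⁿ`. -/
def isLineC {n : ℕ} (L : Set (CP n)) : Prop :=
  ∃ W : Submodule ℂ (CV n), Module.finrank ℂ W = 2 ∧ L = {z | z.rep ∈ W}

/-- ℂ-convexity: the set contains no complex projective line, and its intersection with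
every complex projective line is connected and simply connected. -/
def cConvex {n : ℕ} (E : Set (CP n)) : Prop :=
  (∀ L, isLineC L → ¬ L ⊆ E) ∧
    ∀ L, isLineC L → IsPreconnected (E ∩ L) ∧
      ((E ∩ L).Nonempty → SimplyConnectedSpace ↥(E ∩ L))

/-!
An open convex set `D` is the projectivization of an open convex cone `C` not containing `0`: fix
one representative of a point of `D` and choose for every other point the sign joined to it by a
segment over `D`. Two complex numbers at an angle of at most `π / 2` can be rotated together into
the closed first quadrant, so `D^e` is the projectivization of the open convex set `K = C + iC`.
For every complex subspace `W`, a partition of unity provides a continuous section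
`P(K ∩ W) → K ∩ W` of the projection, so `P(K) ∩ P(W) = P(K ∩ W)` is a retract of a convex set,
hence contractible. Finally `P(K)` contains no line, as it misses a hyperplane by the Hahn–Banach
theorem.
-/

open Set Topology
open scoped LinearAlgebra.Projectivization

section Projectivization

variable {K V : Type*} [DivisionRing K] [AddCommGroup V] [Module K V]

/-- The cone over a set `D` of projective points, with its apex removed: the nonzero vectors
representing a point of `D`. -/
def coneOver (D : Set (ℙ K V)) : Set V :=
  {v | ∃ h : v ≠ 0, Projectivization.mk K v h ∈ D}

variable (K) in
/-- The image in projective space of a set of vectors; the zero vector contributes nothing. -/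
def projImage (S : Set V) : Set (ℙ K V) :=
  {z | ∃ v, ∃ h : v ≠ 0, v ∈ S ∧ Projectivization.mk K v h = z}

theorem zero_notMem_coneOver {D : Set (ℙ K V)} : (0 : V) ∉ coneOver D :=
  fun h => h.1 rfl

theorem smul_mem_coneOver {D : Set (ℙ K V)} {v : V} (hv : v ∈ coneOver D) {c : K} (hc : c ≠ 0) :
    c • v ∈ coneOver D := by
  obtain ⟨h, hD⟩ := hv
  refine ⟨smul_ne_zero hc h, ?_⟩
  rwa [(Projectivization.mk_eq_mk_iff' K (c • v) v _ h).2 ⟨c, rfl⟩]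

theorem rep_mem_coneOver {D : Set (ℙ K V)} {z : ℙ K V} : z.rep ∈ coneOver D ↔ z ∈ D := by
  simp [coneOver, z.rep_nonzero]

theorem rep_mk_mem_iff (W : Submodule K V) {v : V} (hv : v ≠ 0) :
    (Projectivization.mk K v hv).rep ∈ W ↔ v ∈ W := by
  obtain ⟨a, ha⟩ := Projectivization.exists_smul_eq_mk_rep K v hv
  rw [← ha, Units.smul_def, W.smul_mem_iff a.ne_zero]

theorem mem_coneOver_inter_setOf_rep_mem {D : Set (ℙ K V)} {W : Submodule K V} {v : V} :
    v ∈ coneOver (D ∩ {z | z.rep ∈ W}) ↔ v ∈ coneOver D ∧ v ∈ W :=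
  ⟨fun ⟨hv, hD, hW⟩ => ⟨⟨hv, hD⟩, (rep_mk_mem_iff W hv).1 hW⟩,
    fun ⟨⟨hv, hD⟩, hW⟩ => ⟨hv, hD, (rep_mk_mem_iff W hv).2 hW⟩⟩

theorem exists_smul_rep_mem_of_mem_projImage {S : Set V} {z : ℙ K V} (hz : z ∈ projImage K S) :
    ∃ a : K, a • z.rep ∈ S := by
  obtain ⟨v, hv, hvS, rfl⟩ := hz
  obtain ⟨a, ha⟩ := Projectivization.exists_smul_eq_mk_rep K v hv
  exact ⟨(a⁻¹ : Kˣ), by rwa [← ha, ← Units.smul_def, inv_smul_smul]⟩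

theorem projImage_inter_setOf_rep_mem (S : Set V) (W : Submodule K V) :
    projImage K S ∩ {z | z.rep ∈ W} = projImage K (S ∩ W) := by
  ext z
  constructor
  · rintro ⟨⟨v, hv, hvS, rfl⟩, hW⟩
    exact ⟨v, hv, ⟨hvS, (rep_mk_mem_iff W hv).1 hW⟩, rfl⟩
  · rintro ⟨v, hv, ⟨hvS, hvW⟩, rfl⟩
    exact ⟨⟨v, hv, hvS, rfl⟩, (rep_mk_mem_iff W hv).2 hvW⟩

theorem not_setOf_rep_mem_subset_projImage {S : Set V} {f : Module.Dual K V}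
    (hf : ∀ v ∈ S, f v ≠ 0) {W : Submodule K V} (hW : 1 < Module.finrank K W) :
    ¬ {z : ℙ K V | z.rep ∈ W} ⊆ projImage K S := by
  intro hWS
  have : FiniteDimensional K W := Module.finite_of_finrank_pos (by lia)
  obtain ⟨w, hw, hw0⟩ := Submodule.exists_mem_ne_zero_of_ne_bot
    (LinearMap.ker_ne_bot_of_finrank_lt (f := f.domRestrict W) (by simpa using hW))
  have hw0' : (w : V) ≠ 0 := by simpa using hw0
  obtain ⟨v, hv, hvS, hvw⟩ := hWS ((rep_mk_mem_iff W hw0').2 w.2)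
  obtain ⟨a, rfl⟩ := (Projectivization.mk_eq_mk_iff' K _ _ hv hw0').1 hvw
  have hfw : f w = 0 := hw
  exact hf _ hvS (by simp [hfw])

end Projectivization

section Topology

variable {K V : Type*} [TopologicalSpace V] [AddCommGroup V]

theorem isOpenQuotientMap_projectivization_mk' [DivisionRing K] [Module K V]
    [ContinuousConstSMul K V] :
    IsOpenQuotientMap (Projectivization.mk' K : {v : V // v ≠ 0} → ℙ K V) := by
  have : ContinuousConstSMul Kˣ {v : V // v ≠ 0} :=
    ⟨fun a => (continuous_subtype_val.const_smul (a : K)).subtype_mk _⟩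
  have horbit : MulAction.orbitRel Kˣ {v : V // v ≠ 0} = projectivizationSetoid K V := by
    ext v w
    simp only [Setoid.comap_rel, MulAction.orbitRel_apply,
      MulAction.mem_orbit_iff, Subtype.ext_iff]
    rfl
  have h := MulAction.isOpenQuotientMap_quotientMk (Γ := Kˣ) (T := {v : V // v ≠ 0})
  rw [horbit] at h
  exact h

theorem isOpen_coneOver [DivisionRing K] [Module K V] [ContinuousConstSMul K V] [T1Space V]
    {D : Set (ℙ K V)} (hD : IsOpen D) : IsOpen (coneOver D) := by
  have h : coneOver D = Subtype.val '' (Projectivization.mk' K ⁻¹' D) := by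
    ext v
    simp [coneOver, Projectivization.mk'_eq_mk]
  rw [h]
  exact isOpen_ne.isOpenMap_subtype_val _
    (hD.preimage isOpenQuotientMap_projectivization_mk'.continuous)

variable [Field K] [TopologicalSpace K] [Module K V]

/-- The inverse of the affine chart with hyperplane at infinity `ker f`: it sends a point to its
representative on the affine hyperplane `f = 1`, and the points at infinity to the junk value
`0`. -/
def affineLift (f : V →L[K] K) (z : ℙ K V) : V :=
  (f z.rep)⁻¹ • z.rep

theorem affineLift_mk (f : V →L[K] K) {v : V} (hv : v ≠ 0) :
    affineLift f (Projectivization.mk K v hv) = (f v)⁻¹ • v := by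
  obtain ⟨a, ha⟩ := Projectivization.exists_smul_eq_mk_rep K v hv
  rw [affineLift, ← ha, Units.smul_def, map_smul, smul_eq_mul, smul_smul, mul_inv_rev,
    inv_mul_cancel_right₀ a.ne_zero]

theorem continuousAt_affineLift [ContinuousSMul K V] [ContinuousInv₀ K] (f : V →L[K] K)
    {z : ℙ K V} (hz : f z.rep ≠ 0) : ContinuousAt (affineLift f) z := by
  obtain ⟨v, rfl⟩ : ∃ v, Projectivization.mk' K v = z := ⟨⟨_, z.rep_nonzero⟩, z.mk_rep⟩
  have hfv : f v ≠ 0 := by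
    obtain ⟨a, ha⟩ := Projectivization.exists_smul_eq_mk_rep K v.1 v.2
    rw [Projectivization.mk'_eq_mk, ← ha, Units.smul_def, map_smul] at hz
    exact right_ne_zero_of_smul hz
  have hlift : affineLift f ∘ Projectivization.mk' K =
      fun w : {w : V // w ≠ 0} => (f w)⁻¹ • (w : V) := by
    ext1 w
    exact affineLift_mk f w.2
  rw [← isOpenQuotientMap_projectivization_mk'.continuousAt_comp_iff, hlift]
  have hf : Continuous fun w : {w : V // w ≠ 0} => f w := by fun_prop
  exact (hf.continuousAt.inv₀ hfv).smul continuous_subtype_val.continuousAt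

end Topology

section Segment

variable {𝕜 V : Type*} [Field 𝕜] [LinearOrder 𝕜] [IsStrictOrderedRing 𝕜]
  [AddCommGroup V] [Module 𝕜 V] {D : Set (ℙ 𝕜 V)} {v w : V}

theorem smul_add_smul_mem_coneOver (h : segment 𝕜 v w ⊆ coneOver D) {a b : 𝕜} (hab : 0 ≤ a * b)
    (h0 : a • v + b • w ≠ 0) : a • v + b • w ∈ coneOver D := by
  have hsum : a + b ≠ 0 := by
    intro hsum
    obtain rfl : b = -a := by linarith
    obtain rfl : a = 0 := by nlinarith
    simp at h0
  have hmem : (a / (a + b)) • v + (b / (a + b)) • w ∈ segment 𝕜 v w := by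
    refine ⟨_, _, ?_, ?_, by field_simp, rfl⟩
    · rw [← mul_div_mul_right _ _ hsum]
      exact div_nonneg (by nlinarith [mul_self_nonneg a]) (mul_self_nonneg _)
    · rw [← mul_div_mul_right _ _ hsum]
      exact div_nonneg (by nlinarith [mul_self_nonneg b]) (mul_self_nonneg _)
  convert! smul_mem_coneOver (h hmem) hsum using 1
  rw [smul_add, smul_smul, smul_smul, mul_div_cancel₀ _ hsum, mul_div_cancel₀ _ hsum]

theorem segment_subset_coneOver_of_sameRay (hv : v ∈ coneOver D) (hw : w ≠ 0)
    (h : SameRay 𝕜 v w) : segment 𝕜 v w ⊆ coneOver D := by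
  obtain ⟨r, hr, rfl⟩ := h.exists_pos_left hv.1 hw
  rintro _ ⟨a, b, ha, hb, hab, rfl⟩
  rw [smul_smul, ← add_smul]
  refine smul_mem_coneOver hv (ne_of_gt ?_)
  rcases ha.eq_or_lt with rfl | ha
  · simpa [show b = 1 by linarith] using hr
  · positivity

theorem zero_mem_segment_iff_sameRay_neg : (0 : V) ∈ segment 𝕜 v w ↔ SameRay 𝕜 v (-w) := by
  rw [mem_segment_iff_sameRay, zero_sub, sub_zero, ← sameRay_neg_iff, neg_neg]

theorem exists_smul_add_smul_notMem_of_not_segment_subset {U : Set V} (hv : v ∈ U) (hw : w ∈ U)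
    (h : ¬ segment 𝕜 v w ⊆ U) : ∃ a b : 𝕜, 0 < a ∧ 0 < b ∧ a • v + b • w ∉ U := by
  rw [← openSegment_subset_iff_segment_subset hv hw, not_subset] at h
  obtain ⟨_, ⟨a, b, ha, hb, -, rfl⟩, hp⟩ := h
  exact ⟨a, b, ha, hb, hp⟩

theorem coneOver_projImage {C : ConvexCone 𝕜 V} (hC : C.Blunt) :
    coneOver (projImage 𝕜 (C : Set V)) = (C : Set V) ∪ -(C : Set V) := by
  ext v
  constructor
  · rintro ⟨hv, w, hw, hwC, hwv⟩
    obtain ⟨a, rfl⟩ := (Projectivization.mk_eq_mk_iff' 𝕜 _ _ hw hv).1 hwv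
    have ha : a ≠ 0 := left_ne_zero_of_smul hw
    rcases ha.lt_or_gt with ha | ha
    · right
      simpa [smul_smul, ha.ne] using C.smul_mem (inv_pos.2 (neg_pos.2 ha)) hwC
    · left
      simpa [smul_smul, ha.ne'] using C.smul_mem (inv_pos.2 ha) hwC
  · rintro (hv | hv)
    · exact ⟨ne_of_mem_of_not_mem hv hC, v, ne_of_mem_of_not_mem hv hC, hv, rfl⟩
    · have hv0 : -v ≠ 0 := ne_of_mem_of_not_mem hv hC
      exact ⟨neg_ne_zero.1 hv0, -v, hv0, hv,
        (Projectivization.mk_eq_mk_iff' 𝕜 _ _ _ _).2 ⟨-1, by simp⟩⟩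

end Segment

theorem isOpen_setOf_segment_subset {V : Type*} [AddCommGroup V] [Module ℝ V]
    [TopologicalSpace V] [ContinuousAdd V] [ContinuousSMul ℝ V] {U : Set V} (hU : IsOpen U)
    (v : V) : IsOpen {w | segment ℝ v w ⊆ U} := by
  simp only [segment_eq_image, image_subset_iff]
  rw [isOpen_iff_mem_nhds]
  intro w hw
  refine isCompact_Icc.eventually_forall_of_forall_eventually fun t ht => ?_
  have hcont : Continuous fun p : V × ℝ => (1 - p.2) • v + p.2 • p.1 := by fun_prop
  exact hcont.continuousAt.eventually (hU.mem_nhds (hw ht))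

theorem exists_dual_apply_eq_of_linearIndependent {K V ι : Type*} [Field K] [AddCommGroup V]
    [Module K V] {b : ι → V} (hb : LinearIndependent K b) (c : ι → K) :
    ∃ f : Module.Dual K V, ∀ i, f (b i) = c i := by
  obtain ⟨f, hf⟩ := ((Module.Basis.span hb).constr K c).exists_extend
  refine ⟨f, fun i => ?_⟩
  rw [← (Module.Basis.span hb).constr_basis K c i, ← hf, LinearMap.comp_apply,
    Submodule.subtype_apply, Module.Basis.span_apply]

theorem exists_dual_ne_zero_of_smul_add_smul_notMem {K V : Type*} [Field K] [AddCommGroup V]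
    [Module K V] {D : Set (ℙ K V)} {v w : V} (hvw : LinearIndependent K ![v, w]) {a b : K}
    (ha : a ≠ 0) (hp : a • v + b • w ∉ coneOver D) :
    ∃ f : Module.Dual K V, f v = -b ∧ f w = a ∧
      ∀ x ∈ coneOver (D ∩ {z | z.rep ∈ Submodule.span K {v, w}}), f x ≠ 0 := by
  obtain ⟨f, hf⟩ := exists_dual_apply_eq_of_linearIndependent hvw ![-b, a]
  obtain ⟨hfv, hfw⟩ : f v = -b ∧ f w = a := ⟨hf 0, hf 1⟩
  refine ⟨f, hfv, hfw, fun x hx hfx => hp ?_⟩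
  obtain ⟨hxD, hxW⟩ := mem_coneOver_inter_setOf_rep_mem.1 hx
  obtain ⟨s, t, rfl⟩ := Submodule.mem_span_pair.1 hxW
  have hst : t * a = s * b := by
    simpa [hfv, hfw, neg_add_eq_zero, eq_comm] using hfx
  have hs : s ≠ 0 := by
    rintro rfl
    obtain rfl : t = 0 := by simpa [ha] using hst
    exact hxD.1 (by simp)
  convert! smul_mem_coneOver hxD (div_ne_zero ha hs) using 1
  rw [smul_add, smul_smul, smul_smul, div_mul_cancel₀ _ hs, div_mul_eq_mul_div, mul_comm a t,
    hst, mul_div_cancel_left₀ _ hs]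

theorem exists_mem_coneOver_eq_zero {V : Type*} [TopologicalSpace V] [AddCommGroup V] [Module ℝ V]
    [ContinuousSMul ℝ V] {A : Set (ℙ ℝ V)} (hA : IsPreconnected A) {f g : V →L[ℝ] ℝ}
    (hf : ∀ x ∈ coneOver A, f x ≠ 0) {v w : V} (hv : v ∈ coneOver A) (hw : w ∈ coneOver A)
    (hgv : g v / f v ≤ 0) (hgw : 0 ≤ g w / f w) : ∃ x ∈ coneOver A, g x = 0 := by
  have hcont : ContinuousOn (fun z => g (affineLift f z)) A := fun z hz =>
    (g.continuous.continuousAt.comp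
      (continuousAt_affineLift f (hf _ (rep_mem_coneOver.2 hz)))).continuousWithinAt
  have hmk : ∀ {x : V} (hx : x ≠ 0), g (affineLift f (Projectivization.mk ℝ x hx)) = g x / f x :=
    fun hx => by rw [affineLift_mk, map_smul, smul_eq_mul, div_eq_inv_mul]
  obtain ⟨z, hz, hgz⟩ := hA.intermediate_value hv.2 hw.2 hcont
    ⟨(hmk hv.1).trans_le hgv, hgw.trans_eq (hmk hw.1).symm⟩
  have hz' := rep_mem_coneOver.2 hz
  exact ⟨affineLift f z, smul_mem_coneOver hz' (inv_ne_zero (hf _ hz')), hgz⟩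

section RealConvex

variable {n : ℕ} {D : Set (RP n)} {u v w : RV n}

theorem isLineR_span_pair (h : LinearIndependent ℝ ![v, w]) :
    isLineR {x : RP n | x.rep ∈ Submodule.span ℝ {v, w}} := by
  refine ⟨_, ?_, rfl⟩
  rw [← Matrix.range_cons_cons_empty v w ![], finrank_span_eq_card h, Fintype.card_fin]

theorem not_segment_neg_subset_coneOver (hD : ∀ L, isLineR L → ¬ L ⊆ D)
    (h : segment ℝ v w ⊆ coneOver D) : ¬ segment ℝ v (-w) ⊆ coneOver D := by
  intro h'
  by_cases hli : LinearIndependent ℝ ![v, w]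
  · refine hD _ (isLineR_span_pair hli) fun x hx => ?_
    obtain ⟨a, b, hab⟩ := Submodule.mem_span_pair.1 hx
    have h0 := x.rep_nonzero
    rw [← rep_mem_coneOver]
    rw [← hab] at h0 ⊢
    rcases le_total 0 (a * b) with hab' | hab'
    · exact smul_add_smul_mem_coneOver h hab' h0
    · rw [← neg_smul_neg b] at h0 ⊢
      exact smul_add_smul_mem_coneOver h' (by linarith) h0
  · rcases sameRay_or_sameRay_neg_iff_not_linearIndependent.2 hli with hvw | hvw
    · exact zero_notMem_coneOver (h' (zero_mem_segment_iff_sameRay_neg.2 (by rwa [neg_neg])))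
    · exact zero_notMem_coneOver (h (zero_mem_segment_iff_sameRay_neg.2 hvw))

/-- Missing points `p` and `q`, one on each of the two projective segments between `v` and `w`,
would disconnect `D` on the line through `v` and `w`: with `q` at infinity, the affine function
vanishing at `p` changes sign between `v` and `w`. -/
theorem segment_subset_coneOver_or_neg (hD : ∀ L, isLineR L → IsPreconnected (D ∩ L))
    (hv : v ∈ coneOver D) (hw : w ∈ coneOver D) :
    segment ℝ v w ⊆ coneOver D ∨ segment ℝ v (-w) ⊆ coneOver D := by
  have hw' : -w ∈ coneOver D := by
    simpa using smul_mem_coneOver hw (c := (-1 : ℝ)) (by norm_num)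
  by_cases hli : LinearIndependent ℝ ![v, w]
  swap
  · exact (sameRay_or_sameRay_neg_iff_not_linearIndependent.2 hli).imp
      (segment_subset_coneOver_of_sameRay hv hw.1) (segment_subset_coneOver_of_sameRay hv hw'.1)
  by_contra! hcon
  obtain ⟨a, b, ha, hb, hp⟩ := exists_smul_add_smul_notMem_of_not_segment_subset hv hw hcon.1
  obtain ⟨c, d, hc, hd, hq⟩ := exists_smul_add_smul_notMem_of_not_segment_subset hv hw' hcon.2
  rw [smul_neg, ← neg_smul] at hq
  obtain ⟨f, hfv, hfw, hf⟩ := exists_dual_ne_zero_of_smul_add_smul_notMem hli hc.ne' hq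
  obtain ⟨g, hgv, hgw, hg⟩ := exists_dual_ne_zero_of_smul_add_smul_notMem hli ha.ne' hp
  obtain ⟨x, hx, hgx⟩ := exists_mem_coneOver_eq_zero (hD _ (isLineR_span_pair hli))
    (f := f.toContinuousLinearMap) (g := g.toContinuousLinearMap) hf
    (mem_coneOver_inter_setOf_rep_mem.2 ⟨hv, Submodule.subset_span (by simp)⟩)
    (mem_coneOver_inter_setOf_rep_mem.2 ⟨hw, Submodule.subset_span (by simp)⟩)
    (by rw [LinearMap.coe_toContinuousLinearMap', LinearMap.coe_toContinuousLinearMap', hfv, hgv,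
          neg_neg]
        exact div_nonpos_of_nonpos_of_nonneg (neg_nonpos.2 hb.le) hd.le)
    (by rw [LinearMap.coe_toContinuousLinearMap', LinearMap.coe_toContinuousLinearMap', hfw, hgw]
        positivity)
  exact hg x hx hgx

theorem segment_subset_coneOver_of_mem_segment (hDo : IsOpen D) (hD : convexR D)
    (huv : segment ℝ u v ⊆ coneOver D) (hvw : segment ℝ v w ⊆ coneOver D) {x : RV n}
    (hx : x ∈ segment ℝ v w) : segment ℝ u x ⊆ coneOver D := by
  have hopen := isOpen_setOf_segment_subset (isOpen_coneOver hDo) u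
  refine (convex_segment v w).isPreconnected.subset_left_of_subset_union hopen
    (hopen.preimage continuous_neg) ?_ ?_ ⟨v, left_mem_segment ℝ v w, huv⟩ hx
  · exact Set.disjoint_left.2 fun y => not_segment_neg_subset_coneOver hD.1
  · exact fun y hy => segment_subset_coneOver_or_neg hD.2 (huv (left_mem_segment ℝ u v)) (hvw hy)

theorem segment_subset_coneOver_trans (hDo : IsOpen D) (hD : convexR D)
    (huv : segment ℝ u v ⊆ coneOver D) (hvw : segment ℝ v w ⊆ coneOver D) :
    segment ℝ u w ⊆ coneOver D :=
  segment_subset_coneOver_of_mem_segment hDo hD huv hvw (right_mem_segment ℝ v w)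

theorem segment_smul_subset_coneOver (hDo : IsOpen D) (hD : convexR D)
    (h : segment ℝ v w ⊆ coneOver D) {c : ℝ} (hc : 0 < c) :
    segment ℝ v (c • w) ⊆ coneOver D := by
  have hw := h (right_mem_segment ℝ v w)
  exact segment_subset_coneOver_trans hDo hD h (segment_subset_coneOver_of_sameRay hw
    (smul_ne_zero hc.ne' hw.1) (SameRay.sameRay_pos_smul_right w hc))

theorem exists_convexCone_projImage_eq (hDo : IsOpen D) (hD : convexR D) :
    ∃ C : ConvexCone ℝ (RV n),
      IsOpen (C : Set (RV n)) ∧ C.Blunt ∧ projImage ℝ (C : Set (RV n)) = D := by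
  rcases D.eq_empty_or_nonempty with rfl | ⟨x, hx⟩
  · exact ⟨⊥, by simp, by simp [ConvexCone.Blunt], by simp [projImage]⟩
  let C : ConvexCone ℝ (RV n) :=
    { carrier := {w | segment ℝ x.rep w ⊆ coneOver D}
      smul_mem' := fun _ hc _ hw => segment_smul_subset_coneOver hDo hD hw hc
      add_mem' := fun u hu v hv => by
        have huv : segment ℝ u v ⊆ coneOver D :=
          segment_subset_coneOver_trans hDo hD (by rwa [segment_symm]) hv
        have hmid := segment_subset_coneOver_of_mem_segment hDo hD hu huv (midpoint_mem_segment u v)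
        simpa [midpoint_eq_smul_add] using segment_smul_subset_coneOver hDo hD hmid two_pos }
  refine ⟨C, isOpen_setOf_segment_subset (isOpen_coneOver hDo) _, fun h0 =>
    zero_notMem_coneOver (h0 (right_mem_segment ℝ _ _)), subset_antisymm ?_ fun z hz => ?_⟩
  · rintro _ ⟨v, hv, hvC, rfl⟩
    exact (hvC (right_mem_segment ℝ _ _)).2
  · rcases segment_subset_coneOver_or_neg hD.2 (rep_mem_coneOver.2 hx) (rep_mem_coneOver.2 hz)
      with h | h
    · exact ⟨z.rep, z.rep_nonzero, h, z.mk_rep⟩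
    · refine ⟨-z.rep, neg_ne_zero.2 z.rep_nonzero, h, ?_⟩
      rw [← z.mk_rep, Projectivization.mk_eq_mk_iff']
      exact ⟨-1, by simp⟩

end RealConvex

section Tube

theorem smul_add_smul_mem_convexCone {𝕜 V : Type*} [Semiring 𝕜] [PartialOrder 𝕜] [AddCommMonoid V]
    [Module 𝕜 V] {C : ConvexCone 𝕜 V} {v w : V} (hv : v ∈ C) (hw : w ∈ C) {a b : 𝕜} (ha : 0 ≤ a)
    (hb : 0 ≤ b) (hab : 0 < a + b) : a • v + b • w ∈ C := by
  rcases ha.eq_or_lt with rfl | ha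
  · simpa using C.smul_mem (by simpa using hab) hw
  rcases hb.eq_or_lt with rfl | hb
  · simpa using C.smul_mem ha hv
  · exact C.add_mem (C.smul_mem ha hv) (C.smul_mem hb hw)

/-- The set `C + iC`: the complex vectors whose real and imaginary parts both lie in `C`. -/
def cplxTube {ι : Type*} (C : Set (ι → ℝ)) : Set (ι → ℂ) :=
  {w | (fun i => (w i).re) ∈ C ∧ (fun i => (w i).im) ∈ C}

theorem isOpen_cplxTube {ι : Type*} {C : Set (ι → ℝ)} (hC : IsOpen C) : IsOpen (cplxTube C) :=
  (hC.preimage (f := fun w : ι → ℂ => fun i => (w i).re) (by fun_prop)).inter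
    (hC.preimage (f := fun w : ι → ℂ => fun i => (w i).im) (by fun_prop))

theorem convex_cplxTube {ι : Type*} {C : Set (ι → ℝ)} (hC : Convex ℝ C) : Convex ℝ (cplxTube C) :=
  (hC.linear_preimage (Complex.reLm.compLeft ι)).inter
    (hC.linear_preimage (Complex.imLm.compLeft ι))

theorem zero_notMem_cplxTube {ι : Type*} {C : Set (ι → ℝ)} (hC : (0 : ι → ℝ) ∉ C) :
    (0 : ι → ℂ) ∉ cplxTube C :=
  fun h => hC h.1

theorem exists_mul_mem_quadrant_of_re_nonneg {ζ : ℂ} (h : 0 ≤ ζ.re) :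
    ∃ m : ℂ, (0 ≤ m.re ∧ 0 ≤ (m * ζ).re ∧ 0 < m.re + (m * ζ).re) ∧
      0 ≤ m.im ∧ 0 ≤ (m * ζ).im ∧ 0 < m.im + (m * ζ).im := by
  rcases lt_trichotomy ζ.im 0 with hζ | hζ | hζ
  · refine ⟨Complex.I, ?_⟩
    grind [Complex.I_mul_re, Complex.I_mul_im, Complex.I_re, Complex.I_im]
  · refine ⟨1 + Complex.I, ?_⟩
    grind [Complex.mul_re, Complex.mul_im, Complex.add_re, Complex.add_im, Complex.one_re,
      Complex.one_im, Complex.I_re, Complex.I_im]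
  · refine ⟨1, ?_⟩
    grind [Complex.one_re, Complex.one_im]

theorem exists_mul_mem_quadrant {c₀ c₁ : ℂ} (h : 0 ≤ (c₀ * conj c₁).re) (hne : c₀ ≠ 0 ∨ c₁ ≠ 0) :
    ∃ l : ℂ, (0 ≤ (l * c₀).re ∧ 0 ≤ (l * c₁).re ∧ 0 < (l * c₀).re + (l * c₁).re) ∧
      0 ≤ (l * c₀).im ∧ 0 ≤ (l * c₁).im ∧ 0 < (l * c₀).im + (l * c₁).im := by
  rcases eq_or_ne c₀ 0 with rfl | hc₀
  · refine ⟨(1 + Complex.I) / c₁, ?_⟩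
    rw [div_mul_cancel₀ _ (hne.resolve_left (· rfl))]
    simp
  · have hdiv : 0 ≤ (c₁ / c₀).re := by
      rw [Complex.div_re, ← add_div]
      refine div_nonneg ?_ (Complex.normSq_nonneg c₀)
      rw [Complex.mul_re, Complex.conj_re, Complex.conj_im] at h
      linarith
    obtain ⟨m, hm⟩ := exists_mul_mem_quadrant_of_re_nonneg hdiv
    refine ⟨m / c₀, ?_⟩
    rwa [div_mul_cancel₀ _ hc₀, div_mul_eq_mul_div, mul_div_assoc]

variable {n : ℕ} {v₀ v₁ : RV n}

theorem segment_subset_coneOver_iff {D : Set (RP n)} :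
    segment ℝ v₀ v₁ ⊆ coneOver D ↔ (0 : RV n) ∉ segment ℝ v₀ v₁ ∧ realSeg v₀ v₁ ⊆ D := by
  constructor
  · refine fun h => ⟨fun h0 => zero_notMem_coneOver (h h0), ?_⟩
    rintro _ ⟨a, b, hab, hne, rfl⟩
    exact (smul_add_smul_mem_coneOver h hab hne).2
  · rintro ⟨h0, h⟩ _ ⟨a, b, ha, hb, hab, rfl⟩
    have hne : a • v₀ + b • v₁ ≠ 0 := fun h => h0 ⟨a, b, ha, hb, hab, h⟩
    exact ⟨hne, h ⟨a, b, mul_nonneg ha hb, hne, rfl⟩⟩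

theorem segTube_subset_segTube_neg_neg (v₀ v₁ : RV n) : segTube v₀ v₁ ⊆ segTube (-v₀) (-v₁) := by
  rintro _ ⟨c₀, c₁, hc, hne, rfl⟩
  have h : c₀ • cplx v₀ + c₁ • cplx v₁ = -c₀ • cplx (-v₀) + -c₁ • cplx (-v₁) := by
    ext i
    simp [cplx]
  exact ⟨-c₀, -c₁, by simpa using hc, h ▸ hne, by simp only [h]⟩

theorem segTube_smul_right_subset (v : RV n) (s : ℝ) : segTube v (s • v) ⊆ segTube v v := by
  rintro _ ⟨c₀, c₁, -, hne, rfl⟩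
  have h : c₀ • cplx v + c₁ • cplx (s • v) = (c₀ + c₁ * s) • cplx v + (0 : ℂ) • cplx v := by
    have hs : cplx (s • v) = (s : ℂ) • cplx v := by
      ext i
      simp [cplx]
    rw [hs]
    module
  exact ⟨c₀ + c₁ * s, 0, by simp, h ▸ hne, by simp only [h]⟩

theorem segTube_subset_projImage_cplxTube {C : ConvexCone ℝ (RV n)} (hC : C.Blunt) (hv₀ : v₀ ∈ C)
    (hv₁ : v₁ ∈ C) : segTube v₀ v₁ ⊆ projImage ℂ (cplxTube (C : Set (RV n))) := by
  rintro _ ⟨c₀, c₁, hc, hne, rfl⟩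
  have hc' : c₀ ≠ 0 ∨ c₁ ≠ 0 := by
    by_contra! h
    simp [h] at hne
  obtain ⟨l, ⟨hre₀, hre₁, hre⟩, him₀, him₁, him⟩ := exists_mul_mem_quadrant hc hc'
  have hl : l • (c₀ • cplx v₀ + c₁ • cplx v₁) ∈ cplxTube (C : Set (RV n)) := by
    rw [smul_add, smul_smul, smul_smul]
    constructor
    · convert! smul_add_smul_mem_convexCone hv₀ hv₁ hre₀ hre₁ hre using 1
      ext i
      simp [cplx]
    · convert! smul_add_smul_mem_convexCone hv₀ hv₁ him₀ him₁ him using 1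
      ext i
      simp [cplx]
  exact ⟨_, ne_of_mem_of_not_mem hl (zero_notMem_cplxTube hC), hl,
    (Projectivization.mk_eq_mk_iff' ℂ _ _ _ _).2 ⟨l, rfl⟩⟩

theorem eTube_projImage_subset {C : ConvexCone ℝ (RV n)} (hCo : IsOpen (C : Set (RV n)))
    (hC : C.Blunt) :
    eTube (projImage ℝ (C : Set (RV n))) ⊆ projImage ℂ (cplxTube (C : Set (RV n))) := by
  have hsub : ∀ {u₀ u₁ : RV n}, (u₀ ∈ C ∧ u₁ ∈ C ∨ -u₀ ∈ C ∧ -u₁ ∈ C) →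
      segTube u₀ u₁ ⊆ projImage ℂ (cplxTube (C : Set (RV n))) := by
    rintro u₀ u₁ (⟨h₀, h₁⟩ | ⟨h₀, h₁⟩)
    · exact segTube_subset_projImage_cplxTube hC h₀ h₁
    · exact (segTube_subset_segTube_neg_neg u₀ u₁).trans
        (segTube_subset_projImage_cplxTube hC h₀ h₁)
  simp only [eTube, iUnion_subset_iff]
  intro v₀ v₁ hv₀ hv₁ hseg
  by_cases h0 : (0 : RV n) ∈ segment ℝ v₀ v₁
  · obtain ⟨r, -, hr⟩ :=
      (zero_mem_segment_iff_sameRay_neg.1 h0).exists_pos_left hv₀ (neg_ne_zero.2 hv₁)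
    have hv₀C : v₀ ∈ coneOver (projImage ℝ (C : Set (RV n))) :=
      ⟨hv₀, hseg ⟨1, 0, by simp, by simpa using hv₀, by simp⟩⟩
    rw [coneOver_projImage hC] at hv₀C
    rw [← neg_neg v₁, ← hr, ← neg_smul]
    exact (segTube_smul_right_subset v₀ (-r)).trans
      (hsub (hv₀C.imp (fun h => ⟨h, h⟩) fun h => ⟨h, h⟩))
  · have hunion := segment_subset_coneOver_iff.2 ⟨h0, hseg⟩
    rw [coneOver_projImage hC] at hunion
    have hdisj : Disjoint (C : Set (RV n)) (-C) :=
      Set.disjoint_left.2 fun v hv => hC.salient v hv (ne_of_mem_of_not_mem hv hC)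
    refine hsub (((convex_segment v₀ v₁).isPreconnected.subset_or_subset hCo hCo.neg hdisj
      hunion).imp ?_ ?_) <;>
    exact fun h => ⟨h (left_mem_segment ℝ v₀ v₁), h (right_mem_segment ℝ v₀ v₁)⟩

theorem projImage_cplxTube_subset_eTube {C : ConvexCone ℝ (RV n)} (hC : C.Blunt) :
    projImage ℂ (cplxTube (C : Set (RV n))) ⊆ eTube (projImage ℝ (C : Set (RV n))) := by
  rintro _ ⟨w, hw, ⟨hre, him⟩, rfl⟩
  set u : RV n := fun i => (w i).re
  set v : RV n := fun i => (w i).im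
  have huv : (1 : ℂ) • cplx u + Complex.I • cplx v = w := by
    ext i
    simp [u, v, cplx, Complex.ext_iff]
  have hseg : segment ℝ u v ⊆ coneOver (projImage ℝ (C : Set (RV n))) :=
    (C.convex.segment_subset hre him).trans (coneOver_projImage hC ▸ subset_union_left)
  simp only [eTube, mem_iUnion]
  exact ⟨u, v, ne_of_mem_of_not_mem hre hC, ne_of_mem_of_not_mem him hC,
    (segment_subset_coneOver_iff.1 hseg).2, 1, Complex.I, by simp, huv.symm ▸ hw,
    by simp only [huv]⟩

theorem eTube_projImage {C : ConvexCone ℝ (RV n)} (hCo : IsOpen (C : Set (RV n))) (hC : C.Blunt) :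
    eTube (projImage ℝ (C : Set (RV n))) = projImage ℂ (cplxTube (C : Set (RV n))) :=
  (eTube_projImage_subset hCo hC).antisymm (projImage_cplxTube_subset_eTube hC)

end Tube

section Contractible

theorem contractibleSpace_of_leftInverse {X Y : Type*} [TopologicalSpace X] [TopologicalSpace Y]
    [ContractibleSpace Y] {s : C(X, Y)} {p : C(Y, X)} (h : Function.LeftInverse p s) :
    ContractibleSpace X := by
  have hps : p.comp ((ContinuousMap.id Y).comp s) = ContinuousMap.id X := by
    ext1 x
    exact h x
  rw [contractible_iff_id_nullhomotopic, ← hps]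
  exact ((id_nullhomotopic Y).comp_left s).comp_right p

variable {𝕜 V : Type*} [RCLike 𝕜] [NormedAddCommGroup V] [NormedSpace 𝕜 V] [NormedSpace ℝ V]
  [IsScalarTower ℝ 𝕜 V] {K : Set V}

theorem exists_continuousMap_smul_mem (hKo : IsOpen K) (hK : Convex ℝ K) :
    ∃ g : C({w : V | ∃ a : 𝕜, a • w ∈ K}, 𝕜), ∀ w, g w • (w : V) ∈ K :=
  exists_continuous_forall_mem_convex_of_local_const
    (t := fun w : {w : V | ∃ a : 𝕜, a • w ∈ K} => {a : 𝕜 | a • (w : V) ∈ K})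
    (fun w => hK.linear_preimage ((LinearMap.toSpanSingleton 𝕜 V w).restrictScalars ℝ))
    fun ⟨_, a, ha⟩ => ⟨a, ((continuous_const_smul a).comp
      continuous_subtype_val).continuousAt.eventually (hKo.mem_nhds ha)⟩

theorem exists_continuousLinearMap_forall_ne_zero (hKo : IsOpen K) (hK : Convex ℝ K)
    (h0 : (0 : V) ∉ K) : ∃ f : V →L[𝕜] 𝕜, ∀ v ∈ K, f v ≠ 0 := by
  obtain ⟨f, hf⟩ := RCLike.geometric_hahn_banach_point_open (𝕜 := 𝕜) hK hKo h0
  exact ⟨f, fun v hv h => by simpa [h] using hf v hv⟩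

/-- In an affine chart containing `P(K)` the points have canonical representatives; a partition of
unity rescales these continuously into `K`, since the admissible scalars form convex sets. -/
theorem exists_continuousMap_projImage (hKo : IsOpen K) (hK : Convex ℝ K) (h0 : (0 : V) ∉ K) :
    ∃ σ : C(projImage 𝕜 K, V), ∀ z, σ z ∈ K ∧ ∃ a : 𝕜, a • z.1.rep = σ z := by
  obtain ⟨f, hf⟩ := exists_continuousLinearMap_forall_ne_zero (𝕜 := 𝕜) hKo hK h0
  obtain ⟨g, hg⟩ := exists_continuousMap_smul_mem (𝕜 := 𝕜) hKo hK
  have hfrep : ∀ z ∈ projImage 𝕜 K, f z.rep ≠ 0 := by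
    intro z hz hfz
    obtain ⟨a, ha⟩ := exists_smul_rep_mem_of_mem_projImage hz
    exact hf _ ha (by rw [map_smul, hfz, smul_zero])
  have hlift : ∀ z ∈ projImage 𝕜 K, affineLift f z ∈ {w : V | ∃ a : 𝕜, a • w ∈ K} := by
    intro z hz
    obtain ⟨a, ha⟩ := exists_smul_rep_mem_of_mem_projImage hz
    exact ⟨a * f z.rep, by rwa [affineLift, smul_smul, mul_inv_cancel_right₀ (hfrep z hz)]⟩
  have hcont : Continuous fun z : projImage 𝕜 K => affineLift f z.1 :=
    continuous_iff_continuousAt.2 fun z =>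
      (continuousAt_affineLift f (hfrep z.1 z.2)).comp continuous_subtype_val.continuousAt
  let N : C(projImage 𝕜 K, {w : V | ∃ a : 𝕜, a • w ∈ K}) :=
    ⟨fun z => ⟨affineLift f z.1, hlift z.1 z.2⟩, hcont.subtype_mk _⟩
  refine ⟨⟨fun z => g (N z) • (N z : V), by fun_prop⟩, fun z => ⟨hg (N z), ?_⟩⟩
  exact ⟨g (N z) * (f z.1.rep)⁻¹, mul_smul _ _ _⟩

theorem contractibleSpace_projImage_inter (hKo : IsOpen K) (hK : Convex ℝ K) (h0 : (0 : V) ∉ K)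
    (W : Submodule 𝕜 V) (hne : (K ∩ W).Nonempty) :
    ContractibleSpace (projImage 𝕜 (K ∩ W)) := by
  obtain ⟨σ, hσ⟩ := exists_continuousMap_projImage (𝕜 := 𝕜) hKo hK h0
  have hne0 : ∀ v ∈ K ∩ W, v ≠ 0 := fun v hv => ne_of_mem_of_not_mem hv.1 h0
  have : ContractibleSpace ↥(K ∩ W) :=
    (hK.inter (W.restrictScalars ℝ).convex).contractibleSpace hne
  have hsub : projImage 𝕜 (K ∩ W) ⊆ projImage 𝕜 K ∩ {z | z.rep ∈ W} :=
    (projImage_inter_setOf_rep_mem K W).ge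
  let s : C(projImage 𝕜 (K ∩ W), ↥(K ∩ W)) :=
    ⟨fun z => ⟨σ ⟨z, (hsub z.2).1⟩, (hσ _).1, by
      obtain ⟨a, ha⟩ := (hσ ⟨z, (hsub z.2).1⟩).2
      exact ha ▸ W.smul_mem a (hsub z.2).2⟩, by fun_prop⟩
  let p : C(↥(K ∩ W), projImage 𝕜 (K ∩ W)) :=
    ⟨fun v => ⟨Projectivization.mk 𝕜 v.1 (hne0 v.1 v.2), v.1, hne0 v.1 v.2, v.2, rfl⟩,
      (isOpenQuotientMap_projectivization_mk'.continuous.comp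
        (continuous_subtype_val.subtype_mk fun v => hne0 v.1 v.2)).subtype_mk _⟩
  refine contractibleSpace_of_leftInverse (s := s) (p := p) fun z => Subtype.ext ?_
  obtain ⟨a, ha⟩ := (hσ ⟨z, (hsub z.2).1⟩).2
  conv_rhs => rw [← z.1.mk_rep]
  exact (Projectivization.mk_eq_mk_iff' 𝕜 _ _ _ _).2 ⟨a, ha⟩

end Contractible

theorem cConvex_projImage {n : ℕ} {K : Set (CV n)} (hKo : IsOpen K) (hK : Convex ℝ K)
    (h0 : (0 : CV n) ∉ K) : cConvex (projImage ℂ K) := by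
  refine ⟨?_, ?_⟩
  · rintro _ ⟨W, hW, rfl⟩
    obtain ⟨f, hf⟩ := exists_continuousLinearMap_forall_ne_zero (𝕜 := ℂ) hKo hK h0
    exact not_setOf_rep_mem_subset_projImage (f := f.toLinearMap) hf (by lia)
  · rintro _ ⟨W, -, rfl⟩
    rw [projImage_inter_setOf_rep_mem]
    rcases (K ∩ W).eq_empty_or_nonempty with hKW | hKW
    · simp [hKW, projImage, isPreconnected_empty]
    · have := contractibleSpace_projImage_inter hKo hK h0 W hKW
      exact ⟨isPreconnected_iff_preconnectedSpace.2 inferInstance, fun _ => inferInstance⟩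

theorem eTube_cConvex_of_open_properlyConvex_general (n : ℕ) (D : Set (RP n)) (hDo : IsOpen D)
    (hD : convexR D) : cConvex (eTube D) := by
  obtain ⟨C, hCo, hC, rfl⟩ := exists_convexCone_projImage_eq hDo hD
  rw [eTube_projImage hCo hC]
  exact cConvex_projImage (isOpen_cplxTube hCo) (convex_cplxTube C.convex)
    (zero_notMem_cplxTube hC)

/-- If `D ⊆ ℝℙⁿ` is an open properly convex set, then its elliptic tube
`D^e ⊆ ℂℙⁿ` is ℂ-convex. -/
theorem eTube_cConvex_of_open_properlyConvex
    (n : ℕ) (D : Set (RP n)) (hDo : IsOpen D) (hpc : properlyConvexR D) :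
    cConvex (eTube D) :=
  eTube_cConvex_of_open_properlyConvex_general n D hDo hpc.1
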